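/- Let A be an n×n quaternion matrix that possesses a group inverse X and a Moore–Penrose inverse Y. Then the matrix Z := Y·A·X satisfies Z·A = Y·A and R_l(Z) = R_l(A); that is, Z = A† A A^# is a left core inverse of A. -/

import Mathlib

/-- The matrix `Z' = Y·A·X` is a left core inverse of the quaternion matrix `A`:
`Z'·A = Y·A` and the left row space of `Z'` equals that of `A`. -/
theorem left_core_inverse_of_group_and_mp {n : ℕ}
    (A X Y : Matrix (Fin n) (Fin n) (Quaternion ℝ))
    (hX1 : A * X * A = A) (hX2 : X * A * X = X) (hX3 : A * X = X * A)
    (hY1 : A * Y * A = A) (hY2 : Y * A * Y = Y)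
    (hY3 : (A * Y).conjTranspose = A * Y) (hY4 : (Y * A).conjTranspose = Y * A) :
    (Y * A * X) * A = Y * A ∧
    {y : Fin n → Quaternion ℝ | ∃ x, Matrix.vecMul x (Y * A * X) = y} =
      {y : Fin n → Quaternion ℝ | ∃ x, Matrix.vecMul x A = y} := by
  refine ⟨?_, ?_⟩
  · rw [Matrix.mul_assoc Y, Matrix.mul_assoc Y, hX1]
  · have h1 : Y * A * X = (Y * X) * A := by
      rw [Matrix.mul_assoc, hX3, Matrix.mul_assoc]
    have h2 : A = (A * A) * (Y * A * X) := by
      calc A = A * X * A := hX1.symm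
        _ = A * (A * X) := by rw [Matrix.mul_assoc, hX3]
        _ = A * ((A * Y * A) * X) := by rw [hY1]
        _ = (A * A) * (Y * A * X) := by simp only [Matrix.mul_assoc]
    ext y
    constructor
    · rintro ⟨x, rfl⟩
      refine ⟨Matrix.vecMul x (Y * X), ?_⟩
      rw [Matrix.vecMul_vecMul, h1]
    · rintro ⟨x, rfl⟩
      refine ⟨Matrix.vecMul x (A * A), ?_⟩
      rw [Matrix.vecMul_vecMul, ← h2]
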